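/- arXiv:2307.16263 — 2 statements merged into one kernel-verified Lean document; each statement's English description precedes it below -/
import Mathlib

section
/- Let (G,C) be a strongly connected inhomogeneous Mauldin–Williams graph in ℝ^d satisfying the SCOSC such that ∫₀^∞ e^{−s₀(G)t} N_{e^{−t}}(C_i) dt = ∞ for some i ∈ V. Then lim_{t→∞} N_{e^{−t}}(K_j^C) / e^{s₀(G)t} = ∞ for every j ∈ V. -/
open Set Filter Topology MeasureTheory Metric

noncomputable section

/-- Points of `ℝ^d`. -/
abbrev Pt (d : ℕ) := EuclideanSpace ℝ (Fin d)

/-- The `r`-covering number of `A ⊆ ℝ^d`: the least number of closed balls of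
radius `r` needed to cover `A`. -/
noncomputable def coveringNumber {d : ℕ} (A : Set (Pt d)) (r : ℝ) : ℕ :=
  sInf {k : ℕ | ∃ c : Fin k → Pt d, A ⊆ ⋃ i, Metric.closedBall (c i) r}

/-- A Mauldin–Williams graph in `ℝ^d` over a finite directed multigraph with
vertex type `V` and edge type `E`: each vertex `i` carries a non-empty compact
set `X i` equal to the closure of its interior, and each edge `e` carries a
contractive similarity `S e` of ratio `r e ∈ (0,1)` mapping `X (term e)` into
`X (init e)`. -/
structure MWGraph (d : ℕ) (V E : Type) [Fintype V] [Fintype E] where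
  init : E → V
  term : E → V
  X : V → Set (Pt d)
  S : E → Pt d → Pt d
  r : E → ℝ
  X_nonempty : ∀ i, (X i).Nonempty
  X_compact : ∀ i, IsCompact (X i)
  X_regular : ∀ i, closure (interior (X i)) = X i
  r_pos : ∀ e, 0 < r e
  r_lt_one : ∀ e, r e < 1
  S_maps : ∀ e, Set.MapsTo (S e) (X (term e)) (X (init e))
  S_sim : ∀ e x y, dist (S e x) (S e y) = r e * dist x y

namespace MWGraph

variable {d : ℕ} {V E : Type} [Fintype V] [Fintype E]

variable (G : MWGraph d V E)

/-- `G.IsPathFrom j γ` holds iff the list of edges `γ` is a directed path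
starting at vertex `j`. -/
def IsPathFrom : V → List E → Prop
  | _, [] => True
  | j, e :: es => G.init e = j ∧ IsPathFrom (G.term e) es

/-- Terminal vertex of the path `γ` starting at `j`. -/
def pathTerm : V → List E → V
  | j, [] => j
  | _, e :: es => pathTerm (G.term e) es

/-- `S_γ = S_{e₁} ∘ ⋯ ∘ S_{eₙ}` (with `S_∅ = id`). -/
def pathMap : List E → Pt d → Pt d
  | [] => id
  | e :: es => G.S e ∘ pathMap es

/-- `r_γ = r_{e₁} ⋯ r_{eₙ}` (with `r_∅ = 1`). -/
def pathRatio (γ : List E) : ℝ := (γ.map G.r).prod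

/-- The underlying multigraph is strongly connected: for every ordered pair of
vertices there is a (non-empty) directed path from the first to the second. -/
def StronglyConnected : Prop :=
  ∀ i j : V, ∃ γ : List E, γ ≠ [] ∧ G.IsPathFrom i γ ∧ G.pathTerm i γ = j

/-- `K` is the list of graph-directed self-similar sets of `G`: the unique list
of non-empty compact sets with `K i = ⋃_{e ∈ E_i} S_e (K (term e))`. -/
def IsAttractor (K : V → Set (Pt d)) : Prop :=
  (∀ i, IsCompact (K i)) ∧ (∀ i, (K i).Nonempty) ∧
    ∀ i, K i = ⋃ e ∈ {e : E | G.init e = i}, G.S e '' K (G.term e)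

/-- `C` is an admissible list of condensation sets: compact subsets of the `X i`. -/
def IsCondensation (C : V → Set (Pt d)) : Prop :=
  ∀ i, IsCompact (C i) ∧ C i ⊆ G.X i

/-- `K` is the list of inhomogeneous graph-directed self-similar sets of `(G, C)`:
the unique list of non-empty compact sets with
`K i = ⋃_{e ∈ E_i} S_e (K (term e)) ∪ C i`. -/
def IsInhomAttractor (C : V → Set (Pt d)) (K : V → Set (Pt d)) : Prop :=
  (∀ i, IsCompact (K i)) ∧ (∀ i, (K i).Nonempty) ∧
    ∀ i, K i = (⋃ e ∈ {e : E | G.init e = i}, G.S e '' K (G.term e)) ∪ C i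

/-- `G` satisfies the open set condition with the open sets `U`. -/
def IsOSCWith (U : V → Set (Pt d)) : Prop :=
  (∀ i, (U i).Nonempty) ∧ (∀ i, IsOpen (U i)) ∧ (∀ i, Bornology.IsBounded (U i)) ∧
    (∀ i, U i ⊆ G.X i) ∧
    (∀ i, (⋃ e ∈ {e : E | G.init e = i}, G.S e '' U (G.term e)) ⊆ U i) ∧
    ∀ e e' : E, G.init e = G.init e' → e ≠ e' →
      Disjoint (G.S e '' U (G.term e)) (G.S e' '' U (G.term e'))

/-- The set `{-log r_γ : γ a directed cycle of G}`. -/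
def cycleSet : Set ℝ :=
  {x : ℝ | ∃ (j : V) (γ : List E), γ ≠ [] ∧ G.IsPathFrom j γ ∧ G.pathTerm j γ = j ∧
    x = -Real.log (G.pathRatio γ)}

/-- `G_M`, the smallest closed additive subgroup of `ℝ` containing
`{-log r_γ : γ a directed cycle}`. -/
def GM : Set ℝ := closure ((AddSubgroup.closure (G.cycleSet) : AddSubgroup ℝ) : Set ℝ)

variable [DecidableEq V]

/-- The matrix `A_G^s` with entries `(A_G^s)_{ij} = Σ_{e ∈ E_{ij}} r_e^s`. -/
def Amatrix (s : ℝ) : Matrix V V ℝ :=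
  Matrix.of fun i j => ∑ e : E, if G.init e = i ∧ G.term e = j then G.r e ^ s else 0

end MWGraph

/-- Spectral radius of a real square matrix: the largest modulus of a complex
eigenvalue. -/
noncomputable def matrixSpectralRadius {n : Type} [Fintype n] [DecidableEq n]
    (A : Matrix n n ℝ) : ℝ :=
  sSup {x : ℝ | ∃ μ : ℂ, μ ∈ spectrum ℂ (A.map (fun a : ℝ => (a : ℂ))) ∧ x = ‖μ‖}

/-- `s` is the (unique) exponent `s ≥ 0` with `ρ(A_G^s) = 1`, i.e. `s = s₀(G)`. -/
def IsS0 {d : ℕ} {V E : Type} [Fintype V] [Fintype E] [DecidableEq V]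
    (G : MWGraph d V E) (s : ℝ) : Prop :=
  0 ≤ s ∧ matrixSpectralRadius (G.Amatrix s) = 1

/-! ### Similarities of `ℝ^d` -/

lemma similarity_surjective {d : ℕ} {f : Pt d → Pt d} {r : ℝ} (hr : 0 < r)
    (hf : ∀ x y, dist (f x) (f y) = r * dist x y) : Function.Surjective f := by
  have hg : Isometry (fun x => r⁻¹ • f x) := by
    refine Isometry.of_dist_eq fun x y => ?_
    rw [dist_smul₀, hf, Real.norm_eq_abs, abs_of_pos (inv_pos.2 hr), inv_mul_cancel_left₀ hr.ne']
  have hlin : Function.Surjective hg.affineIsometryOfStrictConvexSpace.linear :=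
    LinearMap.injective_iff_surjective.1 <|
      hg.affineIsometryOfStrictConvexSpace.toAffineMap.linear_injective_iff.2 hg.injective
  have hsurj : Function.Surjective (fun x => r⁻¹ • f x) :=
    hg.affineIsometryOfStrictConvexSpace.toAffineMap.linear_surjective_iff.1 hlin
  intro y
  obtain ⟨x, hx⟩ := hsurj (r⁻¹ • y)
  exact ⟨x, smul_right_injective _ (inv_ne_zero hr.ne') hx⟩

lemma similarity_injective {d : ℕ} {f : Pt d → Pt d} {r : ℝ} (hr : 0 < r)
    (hf : ∀ x y, dist (f x) (f y) = r * dist x y) : Function.Injective f := by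
  intro x y hxy
  have h := hf x y
  rw [hxy, dist_self, eq_comm, mul_eq_zero] at h
  exact dist_eq_zero.1 (h.resolve_left hr.ne')

lemma similarity_continuous {d : ℕ} {f : Pt d → Pt d} {r : ℝ} (hr : 0 < r)
    (hf : ∀ x y, dist (f x) (f y) = r * dist x y) : Continuous f :=
  (LipschitzWith.of_dist_le_mul (K := ⟨r, hr.le⟩) fun x y => (hf x y).le).continuous

lemma ball_subset_similarity_image {d : ℕ} {f : Pt d → Pt d} {r : ℝ} (hr : 0 < r)
    (hf : ∀ x y, dist (f x) (f y) = r * dist x y) {x : Pt d} {ρ : ℝ} {W : Set (Pt d)}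
    (h : ball x (ρ / r) ⊆ W) : ball (f x) ρ ⊆ f '' W := by
  intro z hz
  obtain ⟨y, rfl⟩ := similarity_surjective hr hf z
  refine mem_image_of_mem f (h ?_)
  rw [mem_ball, lt_div_iff₀ hr, mul_comm, ← hf]
  exact hz

lemma similarity_isOpen_image {d : ℕ} {f : Pt d → Pt d} {r : ℝ} (hr : 0 < r)
    (hf : ∀ x y, dist (f x) (f y) = r * dist x y) {W : Set (Pt d)} (hW : IsOpen W) :
    IsOpen (f '' W) := by
  rw [Metric.isOpen_iff] at hW ⊢
  rintro _ ⟨x, hx, rfl⟩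
  obtain ⟨ε, hε, h⟩ := hW x hx
  exact ⟨r * ε, mul_pos hr hε,
    ball_subset_similarity_image hr hf (by rwa [mul_div_cancel_left₀ _ hr.ne.symm])⟩

/-! ### Covering and packing -/

lemma IsCompact.exists_coveringNumber_cover {d : ℕ} {A : Set (Pt d)} (hA : IsCompact A) {r : ℝ}
    (hr : 0 < r) : ∃ c : Fin (coveringNumber A r) → Pt d, A ⊆ ⋃ i, closedBall (c i) r := by
  refine Nat.sInf_mem (s := {k : ℕ | ∃ c : Fin k → Pt d, A ⊆ ⋃ i, closedBall (c i) r}) ?_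
  obtain ⟨t, -, ht, hcov⟩ := hA.finite_cover_balls hr
  obtain ⟨n, e, he⟩ := ht.fin_param
  refine ⟨n, e, hcov.trans (iUnion₂_subset fun x hx => ?_)⟩
  rw [← he.2] at hx
  obtain ⟨i, rfl⟩ := hx
  exact ball_subset_closedBall.trans (subset_iUnion (fun i => closedBall (e i) r) i)

lemma coveringNumber_le_card {d : ℕ} {A : Set (Pt d)} {r : ℝ} {D : Finset (Pt d)}
    (h : A ⊆ ⋃ x ∈ D, closedBall x r) : coveringNumber A r ≤ D.card := by
  refine Nat.sInf_le ⟨fun i => D.equivFin.symm i, h.trans (iUnion₂_subset fun x hx => ?_)⟩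
  refine subset_trans ?_ (subset_iUnion _ (D.equivFin ⟨x, hx⟩))
  simp

lemma IsCompact.coveringNumber_antitone {d : ℕ} {A : Set (Pt d)} (hA : IsCompact A) {r r' : ℝ}
    (hr : 0 < r) (hrr : r ≤ r') : coveringNumber A r' ≤ coveringNumber A r := by
  obtain ⟨c, hc⟩ := hA.exists_coveringNumber_cover hr
  exact Nat.sInf_le ⟨c, hc.trans (iUnion_mono fun i => closedBall_subset_closedBall hrr)⟩

/-- If `A` maps into the compact set `B` under a similarity of ratio `r`, then covering `B` at
scale `ρ` is at least as expensive as covering `A` at scale `ρ / r`. -/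
lemma IsCompact.coveringNumber_similarity_le {d : ℕ} {f : Pt d → Pt d} {r : ℝ} (hr : 0 < r)
    (hf : ∀ x y, dist (f x) (f y) = r * dist x y) {A B : Set (Pt d)} (hB : IsCompact B)
    (hAB : f '' A ⊆ B) {ρ : ℝ} (hρ : 0 < ρ) :
    coveringNumber A (ρ / r) ≤ coveringNumber B ρ := by
  obtain ⟨c, hc⟩ := hB.exists_coveringNumber_cover hρ
  choose g hg using similarity_surjective hr hf
  refine Nat.sInf_le ⟨fun i => g (c i), fun x hx => ?_⟩
  obtain ⟨i, hi⟩ := mem_iUnion.1 (hc (hAB (mem_image_of_mem f hx)))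
  refine mem_iUnion.2 ⟨i, ?_⟩
  rwa [mem_closedBall, le_div_iff₀ hr, mul_comm, ← hf, hg]

lemma exists_separated_finset {d : ℕ} (A : Set (Pt d)) {ε : ℝ} (hε : 0 ≤ ε) {n : ℕ}
    (hn : n ≤ coveringNumber A ε) :
    ∃ D : Finset (Pt d), ↑D ⊆ A ∧ (∀ x ∈ D, ∀ y ∈ D, x ≠ y → ε ≤ dist x y) ∧ D.card = n := by
  classical
  induction n with
  | zero => exact ⟨∅, by simp⟩
  | succ n ih =>
    obtain ⟨D, hDA, hsep, hcard⟩ := ih (by omega)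
    have hncov : ¬ A ⊆ ⋃ x ∈ D, closedBall x ε := fun h => by
      have := coveringNumber_le_card h
      omega
    obtain ⟨z, hzA, hz⟩ := not_subset.1 hncov
    simp only [mem_iUnion, mem_closedBall, not_exists, not_le] at hz
    have hzD : z ∉ D := fun h => by
      have := hz z h
      rw [dist_self] at this
      linarith
    refine ⟨insert z D, ?_, ?_, by rw [Finset.card_insert_of_notMem hzD, hcard]⟩
    · rw [Finset.coe_insert]
      exact insert_subset hzA hDA
    · intro x hx y hy hxy
      rcases Finset.mem_insert.1 hx with hxz | hxD <;>
        rcases Finset.mem_insert.1 hy with hyz | hyD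
      · exact absurd (hxz.trans hyz.symm) hxy
      · exact hxz ▸ (hz y hyD).le
      · exact dist_comm x y ▸ hyz ▸ (hz x hxD).le
      · exact hsep x hxD y hyD hxy

lemma card_le_coveringNumber {d : ℕ} {A : Set (Pt d)} (hA : IsCompact A) {D : Finset (Pt d)}
    (hDA : ↑D ⊆ A) {ρ ε : ℝ} (hε : 0 < ε) (hρ : 2 * ε < ρ)
    (hsep : ∀ x ∈ D, ∀ y ∈ D, x ≠ y → ρ ≤ dist x y) : D.card ≤ coveringNumber A ε := by
  obtain ⟨c, hc⟩ := hA.exists_coveringNumber_cover hε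
  have hex : ∀ x : D, ∃ i, dist (x : Pt d) (c i) ≤ ε := fun x => by
    simpa using hc (hDA x.2)
  choose g hg using hex
  have hinj : Function.Injective g := by
    intro x y hxy
    by_contra hne
    have h1 := hsep x x.2 y y.2 (fun h => hne (Subtype.ext h))
    have h2 := hg x
    have h3 := hg y
    rw [← hxy] at h3
    have h4 := dist_triangle_right (x : Pt d) y (c (g x))
    linarith
  simpa using Fintype.card_le_of_injective g hinj

/-- `HasPacking A W ρ y` says that `A` contains a finite `ρ`-separated set of at least `y` points
whose open `ρ`-balls all lie in `W`. -/
def HasPacking {d : ℕ} (A W : Set (Pt d)) (ρ y : ℝ) : Prop :=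
  ∃ D : Finset (Pt d), ↑D ⊆ A ∧ (∀ x ∈ D, ball x ρ ⊆ W) ∧
    (∀ x ∈ D, ∀ z ∈ D, x ≠ z → ρ ≤ dist x z) ∧ y ≤ D.card

lemma HasPacking.of_nonpos {d : ℕ} {A W : Set (Pt d)} {ρ y : ℝ} (hy : y ≤ 0) :
    HasPacking A W ρ y :=
  ⟨∅, by simpa using hy⟩

lemma HasPacking.mono {d : ℕ} {A W : Set (Pt d)} {ρ y y' : ℝ} (h : HasPacking A W ρ y)
    (hy : y' ≤ y) : HasPacking A W ρ y' := by
  obtain ⟨D, h1, h2, h3, h4⟩ := h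
  exact ⟨D, h1, h2, h3, hy.trans h4⟩

namespace MWGraph

variable {d : ℕ} {V E : Type} [Fintype V] [Fintype E] (G : MWGraph d V E)

/-- The union of the images of the sets `U` under all paths of length `m` starting at a vertex. -/
def levelSet (U : V → Set (Pt d)) : ℕ → V → Set (Pt d)
  | 0, i => U i
  | m + 1, i => ⋃ e ∈ {e : E | G.init e = i}, G.S e '' levelSet U m (G.term e)

variable {G}

lemma S_injective (e : E) : Function.Injective (G.S e) :=
  similarity_injective (G.r_pos e) (G.S_sim e)

lemma IsOSCWith.image_subset {U : V → Set (Pt d)} (hU : G.IsOSCWith U) (e : E) :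
    G.S e '' U (G.term e) ⊆ U (G.init e) :=
  (subset_biUnion_of_mem (u := fun e => G.S e '' U (G.term e))
    (show e ∈ {e' : E | G.init e' = G.init e} from rfl)).trans (hU.2.2.2.2.1 (G.init e))

lemma IsOSCWith.levelSet_subset {U : V → Set (Pt d)} (hU : G.IsOSCWith U) (m : ℕ) (i : V) :
    G.levelSet U m i ⊆ U i := by
  induction m generalizing i with
  | zero => exact subset_rfl
  | succ m ih =>
    refine iUnion₂_subset fun e he => ?_
    obtain rfl : G.init e = i := he
    exact (image_mono (ih _)).trans (hU.image_subset e)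

lemma IsInhomAttractor.image_subset {C KC : V → Set (Pt d)} (hKC : G.IsInhomAttractor C KC)
    (e : E) : G.S e '' KC (G.term e) ⊆ KC (G.init e) := by
  rw [hKC.2.2 (G.init e)]
  exact (subset_biUnion_of_mem (u := fun e => G.S e '' KC (G.term e))
    (show e ∈ {e' : E | G.init e' = G.init e} from rfl)).trans subset_union_left

/-- Packings of the pieces combine to a packing of the whole, one level deeper. -/
lemma hasPacking_level_succ [DecidableEq V] {C KC U : V → Set (Pt d)}
    (hKC : G.IsInhomAttractor C KC) (hU : G.IsOSCWith U) {m : ℕ} {j : V} {ρ : ℝ} (hρ : 0 < ρ)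
    {y : E → ℝ} (h : ∀ e, G.init e = j →
      HasPacking (KC (G.term e)) (G.levelSet U m (G.term e)) (ρ / G.r e) (y e)) :
    HasPacking (KC j) (G.levelSet U (m + 1) j) ρ
      (∑ e ∈ Finset.univ.filter (fun e => G.init e = j), y e) := by
  classical
  choose! D hDK hDW hDsep hDcard using h
  have hball : ∀ e, G.init e = j → ∀ x ∈ D e,
      ball (G.S e x) ρ ⊆ G.S e '' G.levelSet U m (G.term e) := fun e he x hx =>
    ball_subset_similarity_image (G.r_pos e) (G.S_sim e) (hDW e he x hx)
  have hcross : ∀ e e', G.init e = j → G.init e' = j → e ≠ e' → ∀ x ∈ D e, ∀ x' ∈ D e',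
      ρ ≤ dist (G.S e x) (G.S e' x') := by
    intro e e' he he' hne x hx x' hx'
    by_contra! hlt
    have h1 : G.S e' x' ∈ G.S e '' U (G.term e) :=
      image_mono (hU.levelSet_subset m _) (hball e he x hx (by rwa [mem_ball, dist_comm]))
    have h2 : G.S e' x' ∈ G.S e' '' U (G.term e') :=
      image_mono (hU.levelSet_subset m _) (hball e' he' x' hx' (mem_ball_self hρ))
    exact disjoint_left.1 (hU.2.2.2.2.2 e e' (he.trans he'.symm) hne) h1 h2
  have hmem : ∀ x, x ∈ (Finset.univ.filter (fun e => G.init e = j)).biUnion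
      (fun e => (D e).image (G.S e)) ↔ ∃ e, G.init e = j ∧ ∃ z ∈ D e, G.S e z = x := by simp
  refine ⟨(Finset.univ.filter (fun e => G.init e = j)).biUnion
    (fun e => (D e).image (G.S e)), ?_, ?_, ?_, ?_⟩
  · intro x hx
    obtain ⟨e, rfl, z, hz, rfl⟩ := (hmem x).1 hx
    exact hKC.image_subset e (mem_image_of_mem _ (hDK e rfl hz))
  · intro x hx
    obtain ⟨e, he, z, hz, rfl⟩ := (hmem x).1 hx
    exact (hball e he z hz).trans (subset_biUnion_of_mem
      (u := fun e => G.S e '' G.levelSet U m (G.term e)) (show e ∈ {e | G.init e = j} from he))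
  · intro x hx x' hx' hne
    obtain ⟨e, he, z, hz, rfl⟩ := (hmem x).1 hx
    obtain ⟨e', he', z', hz', rfl⟩ := (hmem x').1 hx'
    by_cases hee : e = e'
    · subst hee
      have := hDsep e he z hz z' hz' (fun h => hne (congrArg _ h))
      rwa [G.S_sim, mul_comm, ← div_le_iff₀ (G.r_pos e)]
    · exact hcross e e' he he' hee z hz z' hz'
  · rw [Finset.card_biUnion]
    · push_cast
      refine Finset.sum_le_sum fun e he => ?_
      rw [Finset.card_image_of_injective _ (S_injective e)]
      exact hDcard e (Finset.mem_filter.1 he).2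
    · intro e he e' he' hne
      rw [Function.onFun, Finset.disjoint_left]
      intro x hx hx'
      obtain ⟨z, hz, rfl⟩ := Finset.mem_image.1 hx
      obtain ⟨z', hz', hzz⟩ := Finset.mem_image.1 hx'
      have := hcross e e' (Finset.mem_filter.1 he).2 (Finset.mem_filter.1 he').2 hne z hz z' hz'
      rw [hzz, dist_self] at this
      linarith

/-- A packing at level `m` can be enlarged by points outside the level `m` set. -/
lemma hasPacking_add_outside {KC U : V → Set (Pt d)} (hU : G.IsOSCWith U) {m : ℕ} {j : V}
    {ρ y : ℝ} (hρ : 0 < ρ)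
    (h : HasPacking (KC j) (G.levelSet U m j) ρ y) {D' : Finset (Pt d)} (hD'K : ↑D' ⊆ KC j)
    (hD'U : ∀ x ∈ D', ball x ρ ⊆ U j) (hD'out : ∀ x ∈ D', x ∉ G.levelSet U m j)
    (hD'sep : ∀ x ∈ D', ∀ z ∈ D', x ≠ z → ρ ≤ dist x z) :
    HasPacking (KC j) (U j) ρ (y + D'.card) := by
  classical
  obtain ⟨D, hDK, hDW, hDsep, hDcard⟩ := h
  have hcross : ∀ x ∈ D, ∀ z ∈ D', ρ ≤ dist x z := by
    intro x hx z hz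
    by_contra! hlt
    exact hD'out z hz (hDW x hx (by rwa [mem_ball, dist_comm]))
  refine ⟨D ∪ D', ?_, ?_, ?_, ?_⟩
  · rw [Finset.coe_union]
    exact union_subset hDK hD'K
  · intro x hx
    rcases Finset.mem_union.1 hx with hx | hx
    · exact (hDW x hx).trans (hU.levelSet_subset m j)
    · exact hD'U x hx
  · intro x hx z hz hne
    rcases Finset.mem_union.1 hx with hx | hx <;> rcases Finset.mem_union.1 hz with hz | hz
    · exact hDsep x hx z hz hne
    · exact hcross x hx z hz
    · exact dist_comm z x ▸ hcross z hz x hx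
    · exact hD'sep x hx z hz hne
  · rw [Finset.card_union_of_disjoint, Nat.cast_add]
    · gcongr
    · rw [Finset.disjoint_left]
      intro x hx hx'
      have := hcross x hx x hx'
      rw [dist_self] at this
      linarith

/-! ### Paths -/

lemma pathRatio_pos (γ : List E) : 0 < G.pathRatio γ := by
  refine List.prod_pos fun x hx => ?_
  obtain ⟨e, -, rfl⟩ := List.mem_map.1 hx
  exact G.r_pos e

lemma pathMap_sim (γ : List E) (x y : Pt d) :
    dist (G.pathMap γ x) (G.pathMap γ y) = G.pathRatio γ * dist x y := by
  induction γ with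
  | nil => simp [pathMap, pathRatio]
  | cons e γ ih =>
    have h : G.pathRatio (e :: γ) = G.r e * G.pathRatio γ := by simp [pathRatio]
    rw [h, mul_assoc, ← ih]
    exact G.S_sim e _ _

lemma pathRatio_le_pow {q : ℝ} (hq : ∀ e, G.r e ≤ q) (γ : List E) :
    G.pathRatio γ ≤ q ^ γ.length := by
  induction γ with
  | nil => simp [pathRatio]
  | cons e γ ih =>
    have h : G.pathRatio (e :: γ) = G.r e * G.pathRatio γ := by simp [pathRatio]
    rw [h, List.length_cons, pow_succ']
    exact mul_le_mul (hq e) ih (pathRatio_pos γ).le ((G.r_pos e).le.trans (hq e))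

lemma pathMap_append (γ γ' : List E) : G.pathMap (γ ++ γ') = G.pathMap γ ∘ G.pathMap γ' := by
  induction γ with
  | nil => rfl
  | cons e γ ih => simp only [List.cons_append, pathMap, ih, Function.comp_assoc]

lemma pathTerm_append (j : V) (γ γ' : List E) :
    G.pathTerm j (γ ++ γ') = G.pathTerm (G.pathTerm j γ) γ' := by
  induction γ generalizing j with
  | nil => rfl
  | cons e γ ih => exact ih _

lemma IsPathFrom.append {j : V} {γ γ' : List E} (h : G.IsPathFrom j γ)
    (hpath : G.IsPathFrom (G.pathTerm j γ) γ') : G.IsPathFrom j (γ ++ γ') := by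
  induction γ generalizing j with
  | nil => exact hpath
  | cons e γ ih => exact ⟨h.1, ih h.2 hpath⟩

/-- A family of sets which is invariant under the edge maps is invariant under path maps. -/
lemma IsPathFrom.image_subset {Y : V → Set (Pt d)}
    (hY : ∀ e, G.S e '' Y (G.term e) ⊆ Y (G.init e)) {j : V} {γ : List E}
    (h : G.IsPathFrom j γ) : G.pathMap γ '' Y (G.pathTerm j γ) ⊆ Y j := by
  induction γ generalizing j with
  | nil => simp [pathMap, pathTerm]
  | cons e γ ih =>
    obtain ⟨rfl, h⟩ := h
    simp only [pathMap, pathTerm, image_comp]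
    exact (image_mono (ih h)).trans (hY e)

lemma IsOSCWith.image_closure_subset {U : V → Set (Pt d)} (hU : G.IsOSCWith U) (e : E) :
    G.S e '' closure (U (G.term e)) ⊆ closure (U (G.init e)) :=
  (image_closure_subset_closure_image (similarity_continuous (G.r_pos e) (G.S_sim e))).trans
    (closure_mono (hU.image_subset e))

/-- The image of a condensation set under a path avoids the next level. -/
lemma disjoint_pathMap_image_levelSet {C U : V → Set (Pt d)} (hU : G.IsOSCWith U)
    (hCU : ∀ i, C i ⊆ closure (U i) \ ⋃ e ∈ {e : E | G.init e = i}, G.S e '' U (G.term e))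
    {j : V} {γ : List E} (hγ : G.IsPathFrom j γ) :
    Disjoint (G.pathMap γ '' C (G.pathTerm j γ)) (G.levelSet U (γ.length + 1) j) := by
  induction γ generalizing j with
  | nil =>
    rw [disjoint_left]
    rintro _ ⟨x, hx, rfl⟩
    exact (hCU j hx).2
  | cons e γ ih =>
    obtain ⟨rfl, hγ⟩ := hγ
    rw [disjoint_left]
    rintro _ ⟨x, hx, rfl⟩ hmem
    obtain ⟨e', he', z, hz, hzx⟩ := mem_iUnion₂.1 hmem
    change G.S e' z = G.S e (G.pathMap γ x) at hzx
    by_cases hee : e' = e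
    · subst hee
      rw [S_injective e' hzx] at hz
      exact disjoint_left.1 (ih hγ) (mem_image_of_mem _ hx) hz
    · have hcl : G.pathMap γ x ∈ closure (U (G.term e)) :=
        hγ.image_subset (Y := fun k => closure (U k)) hU.image_closure_subset (mem_image_of_mem _ (hCU _ hx).1)
      have hcl' : G.S e' z ∈ closure (G.S e '' U (G.term e)) := hzx ▸
        image_closure_subset_closure_image (similarity_continuous (G.r_pos e) (G.S_sim e))
          (mem_image_of_mem _ hcl)
      have hdisj := (hU.2.2.2.2.2 e' e he' hee).closure_right
        (similarity_isOpen_image (G.r_pos e') (G.S_sim e') (hU.2.1 _))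
      exact disjoint_left.1 hdisj (mem_image_of_mem _ (hU.levelSet_subset _ _ hz)) hcl'

lemma IsAttractor.exists_path {K : V → Set (Pt d)} (hK : G.IsAttractor K) (n : ℕ) {j : V}
    {x : Pt d} (hx : x ∈ K j) :
    ∃ γ : List E, γ.length = n ∧ G.IsPathFrom j γ ∧
      x ∈ G.pathMap γ '' K (G.pathTerm j γ) := by
  induction n generalizing j x with
  | zero => exact ⟨[], rfl, trivial, by simpa [pathMap, pathTerm] using hx⟩
  | succ n ih =>
    rw [hK.2.2 j] at hx
    obtain ⟨e, he, z, hz, rfl⟩ := mem_iUnion₂.1 hx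
    obtain ⟨γ, hlen, hγ, hzγ⟩ := ih hz
    refine ⟨e :: γ, by simp [hlen], ⟨he, hγ⟩, ?_⟩
    simp only [pathMap, pathTerm, image_comp]
    exact mem_image_of_mem _ hzγ

lemma exists_ratio_bounds (G : MWGraph d V E) :
    ∃ p q : ℝ, 0 < p ∧ p < 1 ∧ 0 < q ∧ q < 1 ∧ ∀ e, p ≤ G.r e ∧ G.r e ≤ q := by
  rcases isEmpty_or_nonempty E with hE | hE
  · exact ⟨1 / 2, 1 / 2, by norm_num, by norm_num, by norm_num, by norm_num, fun e => hE.elim e⟩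
  · obtain ⟨e₁, h₁⟩ := Finite.exists_min G.r
    obtain ⟨e₂, h₂⟩ := Finite.exists_max G.r
    exact ⟨G.r e₁, G.r e₂, G.r_pos _, G.r_lt_one _, G.r_pos _, G.r_lt_one _,
      fun e => ⟨h₁ e, h₂ e⟩⟩

/-- From every vertex `j` there is a path to `i` mapping `X i` well inside `U j`. -/
lemma exists_path_deep {K U : V → Set (Pt d)} (hSC : G.StronglyConnected)
    (hK : G.IsAttractor K) (hU : G.IsOSCWith U) (hUK : ∀ i, (U i ∩ K i).Nonempty) (i j : V) :
    ∃ γ : List E, G.IsPathFrom j γ ∧ G.pathTerm j γ = i ∧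
      ∃ δ > 0, ∀ x ∈ G.X i, ball (G.pathMap γ x) δ ⊆ U j := by
  obtain ⟨_, q, -, -, hq0, hq1, hpq⟩ := G.exists_ratio_bounds
  obtain ⟨x₀, hx₀U, hx₀K⟩ := hUK j
  obtain ⟨δ, hδ, hball⟩ := Metric.isOpen_iff.1 (hU.2.1 j) x₀ hx₀U
  have hbdd : Bornology.IsBounded (⋃ k, (K k ∪ G.X k)) :=
    (isCompact_iUnion fun k => (hK.1 k).union (G.X_compact k)).isBounded
  obtain ⟨B, hB⟩ := isBounded_iff.1 hbdd
  obtain ⟨n, hn⟩ : ∃ n : ℕ, q ^ n * B < δ / 2 := by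
    have := (tendsto_pow_atTop_nhds_zero_of_lt_one hq0.le hq1).mul_const B
    rw [zero_mul] at this
    exact (this.eventually_lt_const (half_pos hδ)).exists
  obtain ⟨β, hβn, hβ, y, hy, hyx⟩ := hK.exists_path n hx₀K
  obtain ⟨τ, -, hτ, hτi⟩ := hSC (G.pathTerm j β) i
  refine ⟨β ++ τ, hβ.append hτ, (pathTerm_append ..).trans hτi, δ / 2, half_pos hδ, ?_⟩
  intro x hx
  refine subset_trans (ball_subset_ball' ?_) hball
  have hτx : G.pathMap τ x ∈ G.X (G.pathTerm j β) :=
    hτ.image_subset (fun e => (G.S_maps e).image_subset) (mem_image_of_mem _ (hτi ▸ hx))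
  have hd : dist (G.pathMap τ x) y ≤ B :=
    hB (mem_iUnion.2 ⟨_, Or.inr hτx⟩) (mem_iUnion.2 ⟨_, Or.inl hy⟩)
  have : dist (G.pathMap (β ++ τ) x) x₀ ≤ q ^ n * B := by
    rw [← hyx, pathMap_append, Function.comp_apply, pathMap_sim, ← hβn]
    exact mul_le_mul (pathRatio_le_pow (fun e => (hpq e).2) β) hd dist_nonneg (by positivity)
  linarith

end MWGraph

namespace MWGraph

variable {d : ℕ} {V E : Type} [Fintype V] [Fintype E] {G : MWGraph d V E}

lemma hasPacking_add_condensation {C KC U : V → Set (Pt d)} (hC : G.IsCondensation C)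
    (hKC : G.IsInhomAttractor C KC) (hU : G.IsOSCWith U)
    (hCU : ∀ i, C i ⊆ closure (U i) \ ⋃ e ∈ {e : E | G.init e = i}, G.S e '' U (G.term e))
    {i j : V} {γ : List E} (hγ : G.IsPathFrom j γ) (hγi : G.pathTerm j γ = i) {δ r y : ℝ}
    (hdeep : ∀ x ∈ G.X i, ball (G.pathMap γ x) δ ⊆ U j) (hδ : 0 < δ)
    (hδγ : δ ≤ G.pathRatio γ) (hr : 0 < r) (hr1 : r ≤ 1)
    (h : HasPacking (KC j) (G.levelSet U (γ.length + 1) j) (δ * r) y) :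
    HasPacking (KC j) (U j) (δ * r) (y + coveringNumber (C i) r) := by
  classical
  subst hγi
  set i := G.pathTerm j γ
  have hR := G.pathRatio_pos γ
  have hinj : Function.Injective (G.pathMap γ) := similarity_injective hR (pathMap_sim γ)
  obtain ⟨D, hDC, hDsep, hDcard⟩ := exists_separated_finset (C i)
    (ε := δ * r / G.pathRatio γ) (by positivity) le_rfl
  have hN : coveringNumber (C i) r ≤ D.card := by
    rw [hDcard]
    refine (hC i).1.coveringNumber_antitone (by positivity) ?_
    rw [div_le_iff₀ hR, mul_comm]
    gcongr
  refine (hasPacking_add_outside hU (by positivity) h (D' := D.image (G.pathMap γ))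
    ?_ ?_ ?_ ?_).mono ?_
  · intro x hx
    obtain ⟨z, hz, rfl⟩ := Finset.mem_image.1 hx
    refine hγ.image_subset hKC.image_subset (mem_image_of_mem _ ?_)
    rw [hKC.2.2]
    exact Or.inr (hDC hz)
  · intro x hx
    obtain ⟨z, hz, rfl⟩ := Finset.mem_image.1 hx
    exact (ball_subset_ball (mul_le_of_le_one_right hδ.le hr1)).trans
      (hdeep z ((hC i).2 (hDC hz)))
  · intro x hx
    obtain ⟨z, hz, rfl⟩ := Finset.mem_image.1 hx
    exact disjoint_left.1 (disjoint_pathMap_image_levelSet hU hCU hγ)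
      (mem_image_of_mem _ (hDC hz))
  · intro x hx x' hx' hne
    obtain ⟨z, hz, rfl⟩ := Finset.mem_image.1 hx
    obtain ⟨z', hz', rfl⟩ := Finset.mem_image.1 hx'
    rw [pathMap_sim, mul_comm (G.pathRatio γ), ← div_le_iff₀ hR]
    exact hDsep z hz z' hz' (fun h => hne (congrArg _ h))
  · rw [Finset.card_image_of_injective _ hinj]
    gcongr

variable [DecidableEq V]

/-- One step of the renewal inequality, for a subinvariant weight vector `w`. -/
lemma hasPacking_level_succ_weighted {C KC U : V → Set (Pt d)} (hKC : G.IsInhomAttractor C KC)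
    (hU : G.IsOSCWith U) {s : ℝ} {w : V → ℝ}
    (hw : ∀ j, w j ≤ ∑ e ∈ Finset.univ.filter (fun e => G.init e = j), G.r e ^ s * w (G.term e))
    {δ : ℝ} (hδ : 0 < δ) {m : ℕ} {j : V} {r Y : ℝ} (hr : 0 < r) (hY : 0 ≤ Y)
    (h : ∀ e, G.init e = j → HasPacking (KC (G.term e)) (G.levelSet U m (G.term e))
      (δ * (r / G.r e)) (w (G.term e) * Y / (r / G.r e) ^ s)) :
    HasPacking (KC j) (G.levelSet U (m + 1) j) (δ * r) (w j * Y / r ^ s) := by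
  refine (hasPacking_level_succ hKC hU (mul_pos hδ hr)
    (fun e he => (mul_div_assoc δ r (G.r e)).symm ▸ h e he)).mono ?_
  calc w j * Y / r ^ s
      ≤ (∑ e ∈ Finset.univ.filter (fun e => G.init e = j), G.r e ^ s * w (G.term e))
          * Y / r ^ s := by
        gcongr
        exact hw j
    _ = _ := by
        rw [Finset.sum_mul, Finset.sum_div]
        refine Finset.sum_congr rfl fun e _ => ?_
        have h1 := Real.rpow_pos_of_pos (G.r_pos e) s
        have h2 := Real.rpow_pos_of_pos hr s
        rw [Real.div_rpow hr.le (G.r_pos e).le]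
        field_simp

lemma hasPacking_level_of_hasPacking {C KC U : V → Set (Pt d)} (hKC : G.IsInhomAttractor C KC)
    (hU : G.IsOSCWith U) {s : ℝ} {w : V → ℝ}
    (hw : ∀ j, w j ≤ ∑ e ∈ Finset.univ.filter (fun e => G.init e = j), G.r e ^ s * w (G.term e))
    {p : ℝ} (hp : 0 < p) (hpr : ∀ e, p ≤ G.r e)
    {δ : ℝ} (hδ : 0 < δ) {R B Y : ℝ} (hR : 0 < R) (hY : 0 ≤ Y)
    (h : ∀ u, R ≤ u → u ≤ B → ∀ j, HasPacking (KC j) (U j) (δ * u) (w j * Y / u ^ s))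
    (m : ℕ) {u : ℝ} (hRu : R ≤ u) (huB : u ≤ B * p ^ m) (j : V) :
    HasPacking (KC j) (G.levelSet U m j) (δ * u) (w j * Y / u ^ s) := by
  induction m generalizing u j with
  | zero => exact h u hRu (by simpa using huB) j
  | succ m ih =>
    have hu : 0 < u := hR.trans_le hRu
    refine hasPacking_level_succ_weighted hKC hU hw hδ hu hY fun e _ => ih ?_ ?_ _
    · exact hRu.trans (le_div_self hu.le (G.r_pos e) (G.r_lt_one e).le)
    · rw [div_le_iff₀ (G.r_pos e)]
      have hB : 0 ≤ B * p ^ m := by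
        by_contra! hneg
        have := mul_neg_of_neg_of_pos hneg hp
        rw [pow_succ, ← mul_assoc] at huB
        linarith
      refine huB.trans ?_
      rw [pow_succ, ← mul_assoc]
      exact mul_le_mul_of_nonneg_left (hpr e) hB

/-- The packing numbers of the inhomogeneous attractors dominate the accumulated covering numbers
of the condensation set `C i` over all coarser scales. -/
lemma exists_hasPacking {C K KC U : V → Set (Pt d)} (hSC : G.StronglyConnected)
    (hC : G.IsCondensation C) (hK : G.IsAttractor K) (hKC : G.IsInhomAttractor C KC)
    (hU : G.IsOSCWith U) (hUK : ∀ i, (U i ∩ K i).Nonempty)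
    (hCU : ∀ i, C i ⊆ closure (U i) \ ⋃ e ∈ {e : E | G.init e = i}, G.S e '' U (G.term e))
    {s : ℝ} (hs : 0 ≤ s) {w : V → ℝ} (hw0 : ∀ j, 0 ≤ w j) (hw1 : ∀ j, w j ≤ 1)
    (hw : ∀ j, w j ≤ ∑ e ∈ Finset.univ.filter (fun e => G.init e = j), G.r e ^ s * w (G.term e))
    (i : V) :
    ∃ δ > 0, ∃ a, 0 < a ∧ a < 1 ∧ ∀ r > 0, ∀ k : ℕ, (∀ n < k, r ≤ a ^ n) → ∀ j,
      HasPacking (KC j) (U j) (δ * r)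
        (w j * (a ^ s * ∑ n ∈ Finset.range k, (a ^ n) ^ s * coveringNumber (C i) (a ^ n))
          / r ^ s) := by
  obtain ⟨p, q, hp0, hp1, hq0, hq1, hpq⟩ := G.exists_ratio_bounds
  choose γ hγ hγi δ' hδ' hdeep using exists_path_deep hSC hK hU hUK i
  have : Nonempty V := ⟨i⟩
  obtain ⟨j₀, hj₀⟩ := Finite.exists_min fun j => min (δ' j) (G.pathRatio (γ j))
  obtain ⟨j₁, hj₁⟩ := Finite.exists_max fun j => (γ j).length
  set δ := min (δ' j₀) (G.pathRatio (γ j₀)) with hδdef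
  have hδ : 0 < δ := lt_min (hδ' _) (pathRatio_pos _)
  set M := (γ j₁).length + 1 with hM
  set a := p ^ M with ha
  have ha0 : 0 < a := pow_pos hp0 _
  have ha1 : a < 1 := pow_lt_one₀ hp0.le hp1 (by omega)
  refine ⟨δ, hδ, a, ha0, ha1, ?_⟩
  set H : ℕ → ℝ := fun k =>
    a ^ s * ∑ n ∈ Finset.range k, (a ^ n) ^ s * coveringNumber (C i) (a ^ n) with hH
  have hterm : ∀ n : ℕ, 0 ≤ (a ^ n) ^ s * (coveringNumber (C i) (a ^ n) : ℝ) := fun n => by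
    positivity
  have hH0 : ∀ k, 0 ≤ H k := fun k =>
    mul_nonneg (by positivity) (Finset.sum_nonneg fun n _ => hterm n)
  have hHmono : Monotone H := fun k l hkl =>
    mul_le_mul_of_nonneg_left (Finset.sum_le_sum_of_subset_of_nonneg
      (Finset.range_mono hkl) fun n _ _ => hterm n) (by positivity)
  have key : ∀ N : ℕ, ∀ r, q ^ N < r → ∀ k : ℕ, (∀ n < k, r ≤ a ^ n) → ∀ j,
      HasPacking (KC j) (U j) (δ * r) (w j * H k / r ^ s) := by
    intro N
    induction N with
    | zero =>
      intro r hr k hk j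
      obtain rfl : k = 0 := by
        by_contra hne
        have := hk 0 (Nat.pos_of_ne_zero hne)
        simp only [pow_zero] at this hr
        linarith
      exact HasPacking.of_nonpos (by simp [hH])
    | succ N ih =>
      intro r hr k hk j
      have hr0 : 0 < r := (pow_pos hq0 _).trans hr
      rcases lt_or_ge 1 r with hr1 | hr1
      · obtain rfl : k = 0 := by
          by_contra hne
          have := hk 0 (Nat.pos_of_ne_zero hne)
          simp only [pow_zero] at this
          linarith
        exact HasPacking.of_nonpos (by simp [hH])
      obtain ⟨l, hl, hl'⟩ := exists_nat_pow_near_of_lt_one hr0 hr1 ha0 ha1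
      have hkl : k ≤ l + 1 := by
        by_contra! hlt
        exact absurd (hk (l + 1) hlt) (not_le.2 hl)
      have hlevel : HasPacking (KC j) (G.levelSet U ((γ j).length + 1) j) (δ * r)
          (w j * H l / r ^ s) := by
        refine hasPacking_level_succ_weighted hKC hU hw hδ hr0 (hH0 l) fun e _ => ?_
        have hre : r / q ≤ r / G.r e := div_le_div_of_nonneg_left hr0.le (G.r_pos e) (hpq e).2
        refine hasPacking_level_of_hasPacking hKC hU hw hp0 (fun e => (hpq e).1) hδ
          (R := r / q) (B := r / a) (by positivity) (hH0 l) ?_ _ hre ?_ _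
        · intro u hRu huB j'
          refine ih u (lt_of_lt_of_le ?_ hRu) l (fun n hn => huB.trans ?_) j'
          · rwa [lt_div_iff₀ hq0, ← pow_succ]
          · rw [div_le_iff₀ ha0, ← pow_succ]
            exact hl'.trans (pow_le_pow_of_le_one ha0.le ha1.le hn)
        · have h1 : a ≤ p ^ ((γ j).length + 1) :=
            pow_le_pow_of_le_one hp0.le hp1.le (by have := hj₁ j; omega)
          rw [div_le_iff₀ (G.r_pos e), div_mul_eq_mul_div, div_mul_eq_mul_div, le_div_iff₀ ha0,
            mul_assoc]
          refine mul_le_mul_of_nonneg_left (h1.trans ?_) hr0.le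
          rw [pow_succ]
          exact mul_le_mul_of_nonneg_left (hpq e).1 (by positivity)
      refine (hasPacking_add_condensation hC hKC hU hCU (hγ j) (hγi j)
        (fun x hx => (ball_subset_ball ((hj₀ j).trans (min_le_left _ _))).trans (hdeep j x hx))
        hδ ((hj₀ j).trans (min_le_right _ _)) hr0 hr1 hlevel).mono ?_
      have hrs : 0 < r ^ s := Real.rpow_pos_of_pos hr0 s
      have hstep : H (l + 1) ≤ H l + r ^ s * coveringNumber (C i) r := by
        simp only [hH, Finset.sum_range_succ, mul_add]
        refine add_le_add le_rfl ?_
        rw [← mul_assoc, ← Real.mul_rpow ha0.le (by positivity)]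
        have hN := (hC i).1.coveringNumber_antitone hr0 hl'
        gcongr
        rw [← pow_succ']
        exact hl.le
      rw [div_add' _ _ _ hrs.ne']
      gcongr
      calc w j * H k ≤ w j * H (l + 1) := mul_le_mul_of_nonneg_left (hHmono hkl) (hw0 j)
        _ ≤ w j * (H l + r ^ s * coveringNumber (C i) r) :=
            mul_le_mul_of_nonneg_left hstep (hw0 j)
        _ ≤ w j * H l + coveringNumber (C i) r * r ^ s := by
            rw [mul_add, mul_comm (coveringNumber (C i) r : ℝ)]
            exact add_le_add le_rfl (mul_le_of_le_one_left (by positivity) (hw1 j))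
  intro r hr k hk j
  obtain ⟨N, hN⟩ := exists_pow_lt_of_lt_one hr hq1
  exact key N r hN k hk j

end MWGraph

/-- A divergent covering integral forces the geometric covering series to diverge. -/
lemma IsCompact.tendsto_sum_coveringNumber {d : ℕ} {A : Set (Pt d)} (hA : IsCompact A) {s a : ℝ}
    (hs : 0 ≤ s) (ha0 : 0 < a) (ha1 : a < 1)
    (hint : ∫⁻ t in Set.Ioi (0 : ℝ),
      ENNReal.ofReal (Real.exp (-s * t) * (coveringNumber A (Real.exp (-t)) : ℝ)) = ⊤) :
    Tendsto (fun k : ℕ => ∑ n ∈ Finset.range k, (a ^ n) ^ s * (coveringNumber A (a ^ n) : ℝ))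
      atTop atTop := by
  rw [← not_summable_iff_tendsto_nat_atTop_of_nonneg fun n => by positivity]
  intro hsum
  set l := -Real.log a with hl
  have hl0 : 0 < l := neg_pos.2 (Real.log_neg ha0 ha1)
  have hexp : ∀ n : ℕ, Real.exp (-(n * l)) = a ^ n := fun n => by
    rw [hl, mul_neg, neg_neg, Real.exp_nat_mul, Real.exp_log ha0]
  set b : ℕ → ℝ := fun n => (a ^ n) ^ s * (coveringNumber A (a ^ (n + 1)) : ℝ) with hb
  have hbsum : Summable b := by
    have has := Real.rpow_pos_of_pos ha0 s
    have := ((summable_nat_add_iff 1).2 hsum).mul_left (a ^ s)⁻¹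
    refine this.congr fun n => ?_
    have hmul : (a ^ (n + 1)) ^ s = (a ^ n) ^ s * a ^ s := by
      rw [pow_succ, Real.mul_rpow (by positivity) ha0.le]
    rw [hb, hmul]
    field_simp
  have hcover : Ioi (0 : ℝ) ⊆ ⋃ n : ℕ, Ioc (n * l) ((n + 1) * l) := by
    intro t ht
    have htl : 0 < t / l := div_pos ht hl0
    obtain ⟨n, hn⟩ := Nat.exists_eq_succ_of_ne_zero (Nat.ceil_pos.2 htl).ne'
    have h1 := (Nat.ceil_eq_iff (Nat.succ_ne_zero n)).1 hn
    refine mem_iUnion.2 ⟨n, ?_, ?_⟩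
    · rw [← lt_div_iff₀ hl0]
      simpa using h1.1
    · rw [← div_le_iff₀ hl0]
      simpa using h1.2
  have hpiece : ∀ n : ℕ, ∫⁻ t in Ioc (n * l) ((n + 1) * l),
      ENNReal.ofReal (Real.exp (-s * t) * (coveringNumber A (Real.exp (-t)) : ℝ))
        ≤ ENNReal.ofReal (b n) * ENNReal.ofReal l := by
    intro n
    refine (setLIntegral_mono' measurableSet_Ioc (g := fun _ => ENNReal.ofReal (b n)) ?_).trans ?_
    · intro t ht
      refine ENNReal.ofReal_le_ofReal ?_
      have h1 : Real.exp (-s * t) ≤ (a ^ n) ^ s := by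
        rw [← hexp, ← Real.exp_mul]
        refine Real.exp_le_exp.2 ?_
        nlinarith [mul_le_mul_of_nonneg_left ht.1.le hs]
      have h2 : coveringNumber A (Real.exp (-t)) ≤ coveringNumber A (a ^ (n + 1)) := by
        refine hA.coveringNumber_antitone (by positivity) ?_
        rw [← hexp]
        refine Real.exp_le_exp.2 (neg_le_neg ?_)
        exact_mod_cast ht.2
      simp only [hb]
      gcongr
    · rw [setLIntegral_const, Real.volume_Ioc]
      refine le_of_eq ?_
      congr 2
      ring
  have hfin : ∫⁻ t in Set.Ioi (0 : ℝ),
      ENNReal.ofReal (Real.exp (-s * t) * (coveringNumber A (Real.exp (-t)) : ℝ)) < ⊤ := by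
    refine (lintegral_mono_set hcover).trans_lt ((lintegral_iUnion_le _ _).trans_lt ?_)
    refine (ENNReal.tsum_le_tsum hpiece).trans_lt ?_
    rw [ENNReal.tsum_mul_right]
    exact ENNReal.mul_lt_top hbsum.tsum_ofReal_lt_top ENNReal.ofReal_lt_top
  exact hfin.ne hint

/-- A nonnegative, nonzero, subinvariant weight vector for the exponent `s₀(G)`. -/
lemma IsS0.exists_weight {d : ℕ} {V E : Type} [Fintype V] [Fintype E] [DecidableEq V]
    {G : MWGraph d V E} {s : ℝ} (hs : IsS0 G s) :
    ∃ w : V → ℝ, (∀ j, 0 ≤ w j) ∧ (∀ j, w j ≤ 1) ∧ (∃ j, 0 < w j) ∧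
      ∀ j, w j ≤ ∑ e ∈ Finset.univ.filter (fun e => G.init e = j),
        G.r e ^ s * w (G.term e) := by
  set A : Matrix V V ℂ := (G.Amatrix s).map (fun a : ℝ => (a : ℂ)) with hA
  have himage : {x : ℝ | ∃ μ : ℂ, μ ∈ spectrum ℂ A ∧ x = ‖μ‖}
      = (fun μ : ℂ => ‖μ‖) '' spectrum ℂ A := by
    ext x
    simp [eq_comm]
  have hsup : sSup ((fun μ : ℂ => ‖μ‖) '' spectrum ℂ A) = 1 := himage ▸ hs.2
  have hne : ((fun μ : ℂ => ‖μ‖) '' spectrum ℂ A).Nonempty := by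
    by_contra h
    rw [not_nonempty_iff_eq_empty.1 h, Real.sSup_empty] at hsup
    exact zero_ne_one hsup
  obtain ⟨μ, hμ, hμ1⟩ := hsup ▸ hne.csSup_mem (A.finite_spectrum.image _)
  rw [← Matrix.spectrum_toLin', ← Module.End.hasEigenvalue_iff_mem_spectrum] at hμ
  obtain ⟨z, hz⟩ := hμ.exists_hasEigenvector
  have hz0 : z ≠ 0 := hz.2
  have hAz : A.mulVec z = μ • z := by simpa using hz.apply_eq_smul
  have hexpand : ∀ j, A.mulVec z j
      = ∑ e ∈ Finset.univ.filter (fun e => G.init e = j), ((G.r e ^ s : ℝ) : ℂ) * z (G.term e) := by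
    intro j
    simp only [Matrix.mulVec, dotProduct, hA, Matrix.map_apply, MWGraph.Amatrix, Matrix.of_apply,
      Complex.ofReal_sum, Finset.sum_mul]
    rw [Finset.sum_comm, Finset.sum_filter]
    refine Finset.sum_congr rfl fun e _ => ?_
    rw [Finset.sum_eq_single (G.term e)]
    · by_cases h : G.init e = j <;> simp [h]
    · intro k _ hk
      simp [hk.symm]
    · simp
  have hsub : ∀ j, ‖z j‖ ≤ ∑ e ∈ Finset.univ.filter (fun e => G.init e = j),
      G.r e ^ s * ‖z (G.term e)‖ := by
    intro j
    calc ‖z j‖ = ‖A.mulVec z j‖ := by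
          simp only [hAz, Pi.smul_apply, norm_smul]
          rw [show ‖μ‖ = 1 from hμ1, one_mul]
      _ ≤ _ := by
          rw [hexpand]
          refine (norm_sum_le _ _).trans (Finset.sum_le_sum fun e _ => ?_)
          rw [norm_mul, Complex.norm_real, Real.norm_eq_abs,
            abs_of_pos (Real.rpow_pos_of_pos (G.r_pos e) s)]
  have hnz : 0 < ‖z‖ := norm_pos_iff.2 hz0
  refine ⟨fun j => ‖z j‖ / ‖z‖, fun j => by positivity, fun j => ?_, ?_, fun j => ?_⟩
  · exact div_le_one_of_le₀ (norm_le_pi_norm z j) hnz.le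
  · obtain ⟨j, hj⟩ := Function.ne_iff.1 hz0
    exact ⟨j, div_pos (norm_pos_iff.2 hj) hnz⟩
  · simp only [← mul_div_assoc, ← Finset.sum_div]
    gcongr
    exact hsub j

lemma MWGraph.IsInhomAttractor.tendsto_of_isPathFrom {d : ℕ} {V E : Type} [Fintype V] [Fintype E]
    {G : MWGraph d V E} {C KC : V → Set (Pt d)} (hKC : G.IsInhomAttractor C KC) {s : ℝ} {j : V}
    {γ : List E} (hγ : G.IsPathFrom j γ)
    (h : Tendsto (fun t : ℝ => (coveringNumber (KC (G.pathTerm j γ)) (Real.exp (-t)) : ℝ)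
      / Real.exp (s * t)) atTop atTop) :
    Tendsto (fun t : ℝ => (coveringNumber (KC j) (Real.exp (-t)) : ℝ) / Real.exp (s * t))
      atTop atTop := by
  have hR := G.pathRatio_pos γ
  set c := Real.log (G.pathRatio γ)
  have hshift : Tendsto (fun t : ℝ => Real.exp (s * c) *
      ((coveringNumber (KC (G.pathTerm j γ)) (Real.exp (-(t + c))) : ℝ)
        / Real.exp (s * (t + c)))) atTop atTop :=
    (h.comp (tendsto_atTop_add_const_right _ c tendsto_id)).const_mul_atTop (Real.exp_pos _)
  refine tendsto_atTop_mono (fun t => ?_) hshift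
  have h1 : Real.exp (-(t + c)) = Real.exp (-t) / G.pathRatio γ := by
    rw [neg_add, ← sub_eq_add_neg, Real.exp_sub, Real.exp_log hR]
  have h2 := (hKC.1 j).coveringNumber_similarity_le hR (MWGraph.pathMap_sim γ)
    (hγ.image_subset hKC.image_subset) (Real.exp_pos (-t))
  have h3 : Real.exp (s * (t + c)) = Real.exp (s * c) * Real.exp (s * t) := by
    rw [← Real.exp_add]
    ring_nf
  rw [h1, h3, ← mul_div_assoc, mul_div_mul_left _ _ (Real.exp_pos _).ne']
  gcongr

theorem stmt4 {d : ℕ} {V E : Type} [Fintype V] [Fintype E] [DecidableEq V]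
    (G : MWGraph d V E) (hSC : G.StronglyConnected)
    (C K KC U : V → Set (Pt d))
    (hC : G.IsCondensation C) (hK : G.IsAttractor K) (hKC : G.IsInhomAttractor C KC)
    (hU : G.IsOSCWith U) (hUK : ∀ i, (U i ∩ K i).Nonempty)
    (hCU : ∀ i, C i ⊆ closure (U i) \ ⋃ e ∈ {e : E | G.init e = i}, G.S e '' U (G.term e))
    (s0 : ℝ) (hs0 : IsS0 G s0)
    (hint : ∃ i : V, ∫⁻ t in Set.Ioi (0 : ℝ),
      ENNReal.ofReal (Real.exp (-s0 * t) * (coveringNumber (C i) (Real.exp (-t)) : ℝ)) = ⊤) :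
    ∀ j : V, Tendsto (fun t : ℝ =>
      (coveringNumber (KC j) (Real.exp (-t)) : ℝ) / Real.exp (s0 * t)) atTop atTop := by
  obtain ⟨i, hint⟩ := hint
  obtain ⟨w, hw0, hw1, ⟨j₀, hj₀⟩, hw⟩ := hs0.exists_weight
  obtain ⟨δ, hδ, a, ha0, ha1, hpack⟩ :=
    MWGraph.exists_hasPacking hSC hC hK hKC hU hUK hCU hs0.1 hw0 hw1 hw i
  have hdiv := (hC i).1.tendsto_sum_coveringNumber hs0.1 ha0 ha1 hint
  intro j
  obtain ⟨γ, -, hγ, hγj⟩ := hSC j j₀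
  refine hKC.tendsto_of_isPathFrom hγ ?_
  rw [hγj, Filter.tendsto_atTop]
  intro B
  set c := (δ / 3) ^ s0 * (w j₀ * a ^ s0) with hc
  have hc0 : 0 < c := by positivity
  obtain ⟨k, hk⟩ := ((hdiv.const_mul_atTop hc0).eventually_ge_atTop B).exists
  have hsmall : Tendsto (fun t : ℝ => 3 * Real.exp (-t) / δ) atTop (𝓝 0) := by
    simpa using (Real.tendsto_exp_neg_atTop_nhds_zero.const_mul 3).div_const δ
  filter_upwards [hsmall.eventually_lt_const (pow_pos ha0 k)] with t ht
  have hr : 0 < 3 * Real.exp (-t) / δ := by positivity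
  obtain ⟨D, hDK, -, hsep, hcard⟩ := hpack _ hr k
    (fun n hn => ht.le.trans (pow_le_pow_of_le_one ha0.le ha1.le hn.le)) j₀
  have hD : (D.card : ℝ) ≤ coveringNumber (KC j₀) (Real.exp (-t)) := by
    refine Nat.cast_le.2 (card_le_coveringNumber (hKC.1 j₀) hDK (Real.exp_pos _) ?_ hsep)
    rw [mul_div_cancel₀ _ hδ.ne']
    linarith [Real.exp_pos (-t)]
  rw [le_div_iff₀ (Real.exp_pos _)]
  refine le_trans ?_ (hcard.trans hD)
  have hpow : (3 * Real.exp (-t) / δ) ^ s0 = ((δ / 3) ^ s0 * Real.exp (s0 * t))⁻¹ := by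
    rw [show 3 * Real.exp (-t) / δ = (δ / 3 * Real.exp t)⁻¹ by
      rw [Real.exp_neg]; field_simp, Real.inv_rpow (by positivity),
      Real.mul_rpow (by positivity) (by positivity), ← Real.exp_mul, mul_comm t]
  rw [hpow, div_inv_eq_mul]
  refine (mul_le_mul_of_nonneg_right hk (Real.exp_pos _).le).trans (le_of_eq ?_)
  rw [hc]
  ring
end
end

section
/- Let (G,C) be an inhomogeneous Mauldin–Williams graph in ℝ^d with condensation sets (C_i)_{i∈V}. Then for every i ∈ V, K_i^C = K_i ∪ ⋃_{γ∈Γ_i^*} S_γ(C_{t(γ)}), where (K_i)_{i∈V} are the graph-directed self-similar sets of G (the case of empty condensation). -/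
open Set Filter Topology MeasureTheory Metric

noncomputable section

namespace MWGraph

variable {d : ℕ} {V E : Type} [Fintype V] [Fintype E]

/-- The ratios of a Mauldin–Williams graph are uniformly bounded away from `1`. -/
lemma exists_ratio_bound (G : MWGraph d V E) :
    ∃ ρ : ℝ, 0 ≤ ρ ∧ ρ < 1 ∧ ∀ e, G.r e ≤ ρ := by
  have h : ∀ᶠ ρ in 𝓝[<] (1 : ℝ), ∀ e, ρ ∈ Ioo (G.r e) 1 :=
    eventually_all.2 fun e => Ioo_mem_nhdsLT (G.r_lt_one e)
  have h0 : ∀ᶠ ρ in 𝓝[<] (1 : ℝ), ρ ∈ Ioo (0 : ℝ) 1 := Ioo_mem_nhdsLT zero_lt_one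
  obtain ⟨ρ, hρ, hρ0⟩ := (h.and h0).exists
  exact ⟨ρ, hρ0.1.le, hρ0.2, fun e => (hρ e).1.le⟩

/-- A bounded sub-invariant family of sets is contained in every non-empty closed
super-invariant family. -/
lemma subset_of_subinvariant_of_superinvariant (G : MWGraph d V E) {A B : V → Set (Pt d)}
    (hA : ∀ i, Bornology.IsBounded (A i))
    (hAS : ∀ i, ∀ x ∈ A i, ∃ e, G.init e = i ∧ ∃ y ∈ A (G.term e), G.S e y = x)
    (hBne : ∀ i, (B i).Nonempty) (hBc : ∀ i, IsClosed (B i))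
    (hBS : ∀ e, MapsTo (G.S e) (B (G.term e)) (B (G.init e))) (i : V) : A i ⊆ B i := by
  obtain ⟨ρ, hρ0, hρ1, hρ⟩ := G.exists_ratio_bound
  choose b hb using hBne
  have hM : ∃ M : ℝ, ∀ j, ∀ x ∈ A j, dist x (b j) ≤ M := by
    choose R hR using fun j => (hA j).subset_closedBall (b j)
    obtain ⟨M, hM⟩ := Finite.exists_le R
    exact ⟨M, fun j x hx => (hR j hx).trans (hM j)⟩
  obtain ⟨M, hM⟩ := hM
  have approx : ∀ n : ℕ, ∀ j, ∀ x ∈ A j, ∃ y ∈ B j, dist x y ≤ ρ ^ n * M := by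
    intro n
    induction n with
    | zero => exact fun j x hx => ⟨b j, hb j, by simpa using hM j x hx⟩
    | succ n ih =>
      intro j x hx
      obtain ⟨e, rfl, x', hx', rfl⟩ := hAS j x hx
      obtain ⟨y, hy, hxy⟩ := ih _ x' hx'
      refine ⟨G.S e y, hBS e hy, ?_⟩
      calc dist (G.S e x') (G.S e y) = G.r e * dist x' y := G.S_sim e x' y
        _ ≤ ρ * (ρ ^ n * M) := mul_le_mul (hρ e) hxy dist_nonneg hρ0
        _ = ρ ^ (n + 1) * M := by ring
  intro x hx
  choose y hy hxy using fun n => approx n i x hx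
  have hlim : Tendsto (fun n : ℕ => ρ ^ n * M) atTop (𝓝 0) := by
    simpa using (tendsto_pow_atTop_nhds_zero_of_lt_one hρ0 hρ1).mul_const M
  have hyx : Tendsto y atTop (𝓝 x) := by
    refine tendsto_iff_dist_tendsto_zero.2
      (squeeze_zero (fun _ => dist_nonneg) (fun n => ?_) hlim)
    rw [dist_comm]
    exact hxy n
  exact (hBc i).mem_of_tendsto hyx (Eventually.of_forall hy)

lemma IsInhomAttractor.mapsTo {G : MWGraph d V E} {C KC : V → Set (Pt d)}
    (h : G.IsInhomAttractor C KC) (e : E) :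
    MapsTo (G.S e) (KC (G.term e)) (KC (G.init e)) := by
  intro x hx
  rw [h.2.2 (G.init e)]
  exact Or.inl (mem_biUnion (x := e) rfl (mem_image_of_mem _ hx))

lemma IsAttractor.isInhomAttractor_empty {G : MWGraph d V E} {K : V → Set (Pt d)}
    (h : G.IsAttractor K) : G.IsInhomAttractor (fun _ => ∅) K :=
  ⟨h.1, h.2.1, fun i => by rw [union_empty]; exact h.2.2 i⟩

lemma IsInhomAttractor.pathMap_mem {G : MWGraph d V E} {C KC : V → Set (Pt d)}
    (h : G.IsInhomAttractor C KC) (γ : List E) {i : V} (hγ : G.IsPathFrom i γ) {x : Pt d}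
    (hx : x ∈ C (G.pathTerm i γ)) : G.pathMap γ x ∈ KC i := by
  induction γ generalizing i with
  | nil =>
    rw [h.2.2 i]
    exact Or.inr hx
  | cons e es ih =>
    obtain ⟨rfl, hes⟩ := hγ
    exact h.mapsTo e (ih hes hx)

end MWGraph

theorem stmt7 {d : ℕ} {V E : Type} [Fintype V] [Fintype E]
    (G : MWGraph d V E)
    (C K KC : V → Set (Pt d))
    (hC : G.IsCondensation C) (hK : G.IsAttractor K) (hKC : G.IsInhomAttractor C KC) :
    ∀ i : V, KC i = K i ∪
      ⋃ γ : {γ : List E // G.IsPathFrom i γ}, G.pathMap γ.val '' C (G.pathTerm i γ.val) := by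
  intro i
  apply Subset.antisymm
  · have key := G.subset_of_subinvariant_of_superinvariant
      (A := fun j => KC j \ ⋃ γ : {γ : List E // G.IsPathFrom j γ},
        G.pathMap γ.val '' C (G.pathTerm j γ.val))
      (fun j => (hKC.1 j).isBounded.subset sdiff_subset) ?_ hK.2.1
      (fun j => (hK.1 j).isClosed) hK.isInhomAttractor_empty.mapsTo i
    · exact sdiff_subset_iff.1 key |>.trans (union_comm _ _).subset
    · rintro j x ⟨hx, hxU⟩
      rw [hKC.2.2 j] at hx
      rcases hx with hx | hx
      · obtain ⟨e, rfl, y, hy, rfl⟩ := mem_iUnion₂.1 hx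
        refine ⟨e, rfl, y, ⟨hy, fun hyU => hxU ?_⟩, rfl⟩
        obtain ⟨⟨γ, hγ⟩, z, hz, rfl⟩ := mem_iUnion.1 hyU
        exact mem_iUnion.2 ⟨⟨e :: γ, rfl, hγ⟩, z, hz, rfl⟩
      · exact (hxU (mem_iUnion.2 ⟨⟨[], trivial⟩, x, hx, rfl⟩)).elim
  · refine union_subset ?_ (iUnion_subset ?_)
    · refine G.subset_of_subinvariant_of_superinvariant (fun j => (hK.1 j).isBounded) ?_
        hKC.2.1 (fun j => (hKC.1 j).isClosed) hKC.mapsTo i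
      intro j x hx
      rw [hK.2.2 j] at hx
      obtain ⟨e, he, y, hy, hyx⟩ := mem_iUnion₂.1 hx
      exact ⟨e, he, y, hy, hyx⟩
    · rintro ⟨γ, hγ⟩ _ ⟨x, hx, rfl⟩
      exact hKC.pathMap_mem γ hγ hx
end
end
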